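/- arXiv:2302.12384 — 5 statements merged into one kernel-verified Lean document; each statement's English description precedes it below -/
import Mathlib

section
/- For every integer m ≥ 0, the Jackiw–Pi vortex Q satisfies ‖Q‖_{L²}² = 2π·∫₀^∞ Q(r)²·r dr = 8π(m+1). -/
open MeasureTheory Set Filter

noncomputable section

/-- The Jackiw–Pi vortex `Q(r) = √8 (m+1) r^m / (1 + r^(2m+2))`. -/
def Q (m : ℕ) (r : ℝ) : ℝ :=
  Real.sqrt 8 * (m + 1) * r ^ m / (1 + r ^ (2 * m + 2))

/-- `A_θ[u](r) = -(1/2) ∫₀^r |u(r')|² r' dr'`. -/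
def Atheta (u : ℝ → ℂ) (r : ℝ) : ℝ :=
  -(1 / 2) * ∫ s in (0:ℝ)..r, ‖u s‖ ^ 2 * s

/-- Bilinear version `A_θ[f,g](r) = -(1/2) ∫₀^r Re(conj f g) r' dr'`. -/
def Atheta2 (f g : ℝ → ℂ) (r : ℝ) : ℝ :=
  -(1 / 2) * ∫ s in (0:ℝ)..r, ((starRingEnd ℂ) (f s) * g s).re * s

/-- `A_t[u](r) = -∫_r^∞ (m + A_θ[u](r')) |u(r')|² / r' dr'`. -/
def At (m : ℕ) (u : ℝ → ℂ) (r : ℝ) : ℝ :=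
  -∫ s in Set.Ioi r, ((m : ℝ) + Atheta u s) * ‖u s‖ ^ 2 / s

/-- Squared (2D radial) `L²` norm: `‖u‖² = 2π ∫₀^∞ |u(r)|² r dr`. -/
def L2sq (u : ℝ → ℂ) : ℝ :=
  2 * Real.pi * ∫ r in Set.Ioi (0:ℝ), ‖u r‖ ^ 2 * r

/-- Squared equivariant `Ḣ¹_m` norm. -/
def H1msq (m : ℕ) (u : ℝ → ℂ) : ℝ :=
  2 * Real.pi * ∫ r in Set.Ioi (0:ℝ), (‖deriv u r‖ ^ 2 + (m : ℝ) ^ 2 * ‖u r‖ ^ 2 / r ^ 2) * r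

/-- The energy functional. -/
def Energy (m : ℕ) (u : ℝ → ℂ) : ℝ :=
  2 * Real.pi * ∫ r in Set.Ioi (0:ℝ),
    ((1 / 2) * ‖deriv u r‖ ^ 2
      + (1 / 2) * (((m : ℝ) + Atheta u r) / r) ^ 2 * ‖u r‖ ^ 2
      - (1 / 4) * ‖u r‖ ^ 4) * r

/-- The Chern–Simons–Schrödinger equation at the point `(t, r)`:
`i ∂_t u - A_t[u] u + ∂_r² u + (1/r) ∂_r u - ((m + A_θ[u])/r)² u + |u|² u = 0`. -/
def CSSeq (m : ℕ) (u : ℝ → ℝ → ℂ) (t r : ℝ) : Prop :=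
  Complex.I * deriv (fun s => u s r) t
    - (At m (u t) r : ℂ) * u t r
    + deriv (deriv (u t)) r
    + (1 / (r : ℂ)) * deriv (u t) r
    - ((((m : ℝ) + Atheta (u t) r) / r : ℝ) : ℂ) ^ 2 * u t r
    + ((‖u t r‖ : ℝ) : ℂ) ^ 2 * u t r = 0

/-- A classical `m`-equivariant solution of CSS on the open interval `I`. -/
structure IsCSS (m : ℕ) (I : Set ℝ) (u : ℝ → ℝ → ℂ) : Prop where
  smooth : ContDiffOn ℝ (⊤ : ℕ∞) (fun p : ℝ × ℝ => u p.1 p.2) (I ×ˢ Set.Ioi (0:ℝ))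
  integrable : ∀ t ∈ I, IntegrableOn (fun r => ‖u t r‖ ^ 2 * r) (Set.Ioi (0:ℝ))
  equivariant : ∃ U : ℝ → ℝ × ℝ → ℂ,
    ContDiffOn ℝ (⊤ : ℕ∞) (fun p : ℝ × (ℝ × ℝ) => U p.1 p.2) (I ×ˢ (Set.univ : Set (ℝ × ℝ))) ∧
    ∀ t ∈ I, ∀ x : ℝ × ℝ, x ≠ 0 →
      U t x = u t (Real.sqrt (x.1 ^ 2 + x.2 ^ 2)) *
        (((x.1 : ℂ) + (x.2 : ℂ) * Complex.I) / ((Real.sqrt (x.1 ^ 2 + x.2 ^ 2) : ℝ) : ℂ)) ^ m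
  bounded : ∀ J : Set ℝ, J ⊆ I → IsCompact J → ∃ C : ℝ, ∀ t ∈ J,
    Real.sqrt (L2sq (u t)) + Real.sqrt (H1msq m (u t)) ≤ C
  eq : ∀ t ∈ I, ∀ r : ℝ, 0 < r → CSSeq m u t r

/-- Tightness: uniformly small mass near spatial infinity. -/
def Tight (I : Set ℝ) (u : ℝ → ℝ → ℂ) : Prop :=
  ∀ η : ℝ, 0 < η → ∃ R : ℝ, ∀ t ∈ I,
    2 * Real.pi * ∫ r in Set.Ioi R, ‖u t r‖ ^ 2 * r < η

/-- The real inner product `(f,g)_r = Re (2π ∫₀^∞ f conj(g) r dr)`. -/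
def iprod (f g : ℝ → ℂ) : ℝ :=
  2 * Real.pi * (∫ r in Set.Ioi (0:ℝ), f r * (starRingEnd ℂ) (g r) * (r : ℂ)).re

/-- `ΛQ = r Q' + Q`. -/
def LamQ (m : ℕ) (r : ℝ) : ℝ := r * deriv (Q m) r + Q m r

/-- The linearized Bogomol'nyi operator `L_Q`. -/
def LQ (m : ℕ) (f : ℝ → ℂ) (r : ℝ) : ℂ :=
  deriv f r - ((((m : ℝ) + Atheta (fun s => (Q m s : ℂ)) r) / r : ℝ) : ℂ) * f r
    - ((2 * Atheta2 (fun s => (Q m s : ℂ)) f r / r : ℝ) : ℂ) * (Q m r : ℂ)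

end

/-- `‖Q‖_{L²}² = 2π ∫₀^∞ Q(r)² r dr = 8π(m+1)` for every integer `m ≥ 0`. -/
theorem stmt0 (m : ℕ) :
    2 * Real.pi * ∫ r in Set.Ioi (0:ℝ), Q m r ^ 2 * r = 8 * Real.pi * (m + 1) := by
  have h : ∫ r in Set.Ioi (0:ℝ), Q m r ^ 2 * r
      = 0 - (fun r : ℝ => -(4 * ((m:ℝ) + 1)) * (1 + r ^ (2 * m + 2))⁻¹) 0 := by
    refine integral_Ioi_of_hasDerivAt_of_nonneg'
      (g := fun r : ℝ => -(4 * ((m:ℝ) + 1)) * (1 + r ^ (2 * m + 2))⁻¹) ?_ ?_ ?_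
    · intro x hx
      have hx0 : (0:ℝ) ≤ x := hx
      have hpos : (0:ℝ) < 1 + x ^ (2 * m + 2) := by positivity
      have h1 := (((hasDerivAt_pow (2 * m + 2) x).const_add 1).inv hpos.ne').const_mul
        (-(4 * ((m:ℝ) + 1)))
      refine h1.congr_deriv ?_
      have h8 : Real.sqrt 8 ^ 2 = 8 := Real.sq_sqrt (by norm_num)
      have e : 2 * m + 2 - 1 = 2 * m + 1 := by omega
      unfold Q
      rw [e, div_pow, mul_pow, mul_pow, h8]
      field_simp
      push_cast
      ring
    · intro x hx
      have hx0 : (0:ℝ) < x := hx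
      positivity
    · have h2 : Tendsto (fun r : ℝ => 1 + r ^ (2 * m + 2)) atTop atTop :=
        tendsto_atTop_add_const_left _ _ (tendsto_pow_atTop (by omega))
      simpa using (tendsto_inv_atTop_zero.comp h2).const_mul (-(4 * ((m:ℝ) + 1)))
  rw [h]
  simp
  ring
end

section
/- For every integer m ≥ 0 and every r > 0: A_θ[Q](r) = −2(m+1)·r^(2m+2)/(1 + r^(2m+2)), and Q solves the Bogomol'nyi equation D_Q Q = 0, i.e. Q'(r) − ((m + A_θ[Q](r))/r)·Q(r) = 0. -/
open MeasureTheory Set Filter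

/-- `A_θ[Q](r) = -2(m+1) r^(2m+2)/(1+r^(2m+2))` and `Q` solves the
Bogomol'nyi equation `D_Q Q = 0`. -/
theorem stmt2 (m : ℕ) (r : ℝ) (hr : 0 < r) :
    Atheta (fun s => (Q m s : ℂ)) r = -2 * (m + 1) * r ^ (2 * m + 2) / (1 + r ^ (2 * m + 2)) ∧
    deriv (Q m) r - (((m : ℝ) + Atheta (fun s => (Q m s : ℂ)) r) / r) * Q m r = 0 := by
  have hpos : ∀ x : ℝ, 0 < 1 + x ^ (2 * m + 2) := by
    intro x
    have : 0 ≤ x ^ (2 * m + 2) := Even.pow_nonneg ⟨m + 1, by ring⟩ x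
    linarith
  have hden : ∀ x : ℝ, HasDerivAt (fun x : ℝ => 1 + x ^ (2 * m + 2))
      ((2 * m + 2 : ℝ) * x ^ (2 * m + 1)) x := by
    intro x
    have h := (hasDerivAt_pow (2 * m + 2) x).const_add 1
    refine HasDerivAt.congr_deriv h ?_
    push_cast
    rfl
  have h8 : Real.sqrt 8 ^ 2 = 8 := Real.sq_sqrt (by norm_num)
  have hA : Atheta (fun s => (Q m s : ℂ)) r
      = -2 * (m + 1) * r ^ (2 * m + 2) / (1 + r ^ (2 * m + 2)) := by
    have hF : ∀ x ∈ Set.uIcc 0 r,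
        HasDerivAt (fun x : ℝ => -(4 * (m + 1 : ℝ)) / (1 + x ^ (2 * m + 2)))
          (‖(Q m x : ℂ)‖ ^ 2 * x) x := by
      intro x _
      have h := (hasDerivAt_const x (-(4 * (m + 1 : ℝ)))).div (hden x) (hpos x).ne'
      refine HasDerivAt.congr_deriv h ?_
      rw [Complex.norm_real, Real.norm_eq_abs, sq_abs, Q, div_pow, mul_pow, mul_pow, h8]
      have := (hpos x).ne'
      field_simp
      ring
    have hc : Continuous (fun x : ℝ => ‖(Q m x : ℂ)‖ ^ 2 * x) := by
      have : Continuous (Q m) := by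
        unfold Q
        exact Continuous.div (by fun_prop) (by fun_prop) (fun x => (hpos x).ne')
      fun_prop
    unfold Atheta
    rw [intervalIntegral.integral_eq_sub_of_hasDerivAt hF (hc.intervalIntegrable _ _)]
    have := (hpos r).ne'
    rw [zero_pow (by omega)]
    field_simp
    ring
  refine ⟨hA, ?_⟩
  rw [hA]
  have hn : HasDerivAt (fun x : ℝ => Real.sqrt 8 * (m + 1) * x ^ m)
      (Real.sqrt 8 * (m + 1) * (m * r ^ m / r)) r := by
    have h := (hasDerivAt_pow m r).const_mul (Real.sqrt 8 * (m + 1 : ℝ))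
    refine HasDerivAt.congr_deriv h ?_
    congr 1
    rcases m with _ | k
    · simp
    · rw [Nat.add_sub_cancel, pow_succ]
      field_simp
  have hQ : HasDerivAt (Q m) _ r := hn.div (hden r) (hpos r).ne'
  rw [hQ.deriv, Q]
  have := (hpos r).ne'
  field_simp
  ring
end

section
/- For every integer m ≥ 0 and every r > 0: A_t[Q](r) = (1/2)·Q(r)², and Q is a static solution of the self-dual Chern–Simons–Schrödinger equation, i.e. −A_t[Q](r)·Q(r) + Q''(r) + (1/r)·Q'(r) − ((m + A_θ[Q](r))/r)²·Q(r) + Q(r)³ = 0. -/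
open MeasureTheory Set Filter

theorem aux_D (r : ℝ) (m : ℕ) : 0 < 1 + r ^ (2 * m + 2) := by
  have : 0 ≤ r ^ (2 * m + 2) := Even.pow_nonneg ⟨m + 1, by ring⟩ r
  linarith

theorem aux_Qsq (m : ℕ) (r : ℝ) :
    Q m r ^ 2 = 8 * (m + 1) ^ 2 * r ^ (2 * m) / (1 + r ^ (2 * m + 2)) ^ 2 := by
  unfold Q
  rw [div_pow, mul_pow, mul_pow, Real.sq_sqrt (by norm_num), ← pow_mul, mul_comm m 2]

theorem aux_prim (m : ℕ) (r : ℝ) :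
    HasDerivAt (fun s : ℝ => -(4 * ((m:ℝ) + 1)) / (1 + s ^ (2 * m + 2))) (Q m r ^ 2 * r) r := by
  have hD := (aux_D r m).ne'
  have h1 : HasDerivAt (fun s : ℝ => 1 + s ^ (2 * m + 2))
      (((2 * m + 2 : ℕ) : ℝ) * r ^ (2 * m + 1)) r := by
    simpa using (hasDerivAt_pow (2 * m + 2) r).const_add 1
  have h2 := (hasDerivAt_const r (-(4 * ((m:ℝ) + 1)))).div h1 hD
  refine HasDerivAt.congr_deriv h2 ?_
  rw [aux_Qsq]
  push_cast
  field_simp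
  ring

theorem aux_cont (m : ℕ) : Continuous (Q m) := by
  unfold Q
  exact Continuous.div (by fun_prop) (by fun_prop) (fun r => (aux_D r m).ne')

theorem aux_Atheta (m : ℕ) (r : ℝ) :
    Atheta (fun s => (Q m s : ℂ)) r
      = -(2 * ((m:ℝ) + 1)) + 2 * ((m:ℝ) + 1) / (1 + r ^ (2 * m + 2)) := by
  unfold Atheta
  have h : ∀ s : ℝ, ‖(Q m s : ℂ)‖ ^ 2 * s = Q m s ^ 2 * s := by
    intro s; rw [Complex.norm_real, Real.norm_eq_abs, sq_abs]
  simp only [h]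
  have hc := aux_cont m
  rw [intervalIntegral.integral_eq_sub_of_hasDerivAt (fun x _ => aux_prim m x)
    ((by fun_prop : Continuous fun s => Q m s ^ 2 * s).intervalIntegrable _ _)]
  have hD := (aux_D r m).ne'
  rw [zero_pow (by omega)]
  field_simp
  ring

theorem aux_Aderiv (m : ℕ) (r : ℝ) :
    HasDerivAt (fun s => (m:ℝ) + Atheta (fun s => (Q m s : ℂ)) s) (-(1 / 2) * (Q m r ^ 2 * r)) r := by
  have h := ((aux_prim m r).const_mul (-(1 / 2))).const_add ((m:ℝ) - 2 * (m + 1))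
  refine h.congr_of_eventuallyEq (Filter.Eventually.of_forall fun s => ?_)
  simp only [aux_Atheta]
  ring

theorem aux_Qd (m : ℕ) (r : ℝ) (hr : 0 < r) :
    HasDerivAt (Q m) (((m:ℝ) + Atheta (fun s => (Q m s : ℂ)) r) / r * Q m r) r := by
  have hD := (aux_D r m).ne'
  have h1 : HasDerivAt (fun s : ℝ => 1 + s ^ (2 * m + 2))
      (((2 * m + 2 : ℕ) : ℝ) * r ^ (2 * m + 1)) r := by
    simpa using (hasDerivAt_pow (2 * m + 2) r).const_add 1
  have h2 := ((hasDerivAt_pow m r).const_mul (Real.sqrt 8 * ((m:ℝ) + 1))).div h1 hD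
  refine HasDerivAt.congr_deriv h2 ?_
  rw [aux_Atheta]
  unfold Q
  have h3 : (m:ℝ) * r ^ (m - 1) = m * r ^ m / r := by
    cases m with
    | zero => simp
    | succ k => simp only [Nat.add_sub_cancel]; rw [pow_succ]; field_simp
  rw [h3]
  push_cast
  field_simp
  ring

theorem aux_At (m : ℕ) (r : ℝ) (hr : 0 < r) :
    At m (fun s => (Q m s : ℂ)) r = (1 / 2) * Q m r ^ 2 := by
  unfold At
  have h : ∀ s : ℝ, ‖(Q m s : ℂ)‖ ^ 2 = Q m s ^ 2 := by
    intro s; rw [Complex.norm_real, Real.norm_eq_abs, sq_abs]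
  simp only [h]
  have hlim : Tendsto (fun s : ℝ => 1 + s ^ (2 * m + 2)) atTop atTop :=
    tendsto_atTop_add_const_left _ _ (tendsto_pow_atTop (by omega))
  have hQi : IntegrableOn (fun s => Q m s ^ 2 * s) (Ioi r) := by
    refine integrableOn_Ioi_deriv_of_nonneg' (fun x _ => aux_prim m x) (l := 0) ?_ ?_
    · intro x hx
      have : 0 < x := hr.trans hx
      positivity
    · exact hlim.const_div_atTop _
  have hcQ := aux_cont m
  have hcA : Continuous fun s => (m:ℝ) + Atheta (fun s => (Q m s : ℂ)) s :=
    continuous_iff_continuousAt.2 fun x => (aux_Aderiv m x).continuousAt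
  have hb : ∀ s : ℝ, |(m:ℝ) + Atheta (fun s => (Q m s : ℂ)) s| ≤ m + 2 := by
    intro s
    rw [aux_Atheta]
    have hD := aux_D s m
    have h0 : 0 ≤ s ^ (2 * m + 2) := Even.pow_nonneg ⟨m + 1, by ring⟩ s
    have hm : (0:ℝ) ≤ m := Nat.cast_nonneg m
    have e1 : 0 ≤ 2 * ((m:ℝ) + 1) / (1 + s ^ (2 * m + 2)) := by positivity
    have e2 : 2 * ((m:ℝ) + 1) / (1 + s ^ (2 * m + 2)) ≤ 2 * ((m:ℝ) + 1) :=
      div_le_self (by positivity) (by linarith)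
    rw [abs_le]
    constructor <;> linarith
  have hi : IntegrableOn
      (fun s => ((m:ℝ) + Atheta (fun s => (Q m s : ℂ)) s) * Q m s ^ 2 / s) (Ioi r) := by
    refine Integrable.mono' (hQi.const_mul (((m:ℝ) + 2) / r ^ 2)) ?_ ?_
    · refine ContinuousOn.aestronglyMeasurable ?_ measurableSet_Ioi
      refine ContinuousOn.div (by fun_prop) (by fun_prop) fun x hx => (hr.trans hx).ne'
    · refine (ae_restrict_iff' measurableSet_Ioi).2 (Filter.Eventually.of_forall fun x hx => ?_)
      have hx' : r < x := hx
      have hx0 : 0 < x := hr.trans hx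
      rw [Real.norm_eq_abs, abs_div, abs_mul, abs_of_pos hx0, abs_of_nonneg (sq_nonneg (Q m x))]
      rw [div_le_iff₀ hx0]
      have e1 : (1:ℝ) ≤ x ^ 2 / r ^ 2 := by
        rw [one_le_div (by positivity)]; gcongr
      have hm : (0:ℝ) ≤ m := Nat.cast_nonneg m
      calc _ ≤ ((m:ℝ) + 2) * Q m x ^ 2 * 1 := by
            rw [mul_one]; gcongr; exact hb x
        _ ≤ ((m:ℝ) + 2) * Q m x ^ 2 * (x ^ 2 / r ^ 2) := by gcongr
        _ = _ := by ring
  have hd : ∀ x ∈ Ici r, HasDerivAt (fun s => (1 / 2) * Q m s ^ 2)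
      (((m:ℝ) + Atheta (fun s => (Q m s : ℂ)) x) * Q m x ^ 2 / x) x := by
    intro x hx
    have hx0 : 0 < x := lt_of_lt_of_le hr hx
    refine (((aux_Qd m x hx0).pow 2).const_mul (1 / 2)).congr_deriv ?_
    push_cast
    ring
  have ht : Tendsto (fun s => (1 / 2) * Q m s ^ 2) atTop (nhds 0) := by
    have hg : Tendsto (fun s : ℝ => 4 * ((m:ℝ) + 1) ^ 2 / (1 + s ^ (2 * m + 2))) atTop (nhds 0) :=
      hlim.const_div_atTop _
    refine tendsto_of_tendsto_of_tendsto_of_le_of_le' tendsto_const_nhds hg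
      (Filter.Eventually.of_forall fun s => by positivity) ?_
    filter_upwards [eventually_ge_atTop 1] with s hs
    have hD := aux_D s m
    rw [aux_Qsq, ← mul_div_assoc, div_le_div_iff₀ (by positivity) hD]
    have e : s ^ (2 * m) ≤ 1 + s ^ (2 * m + 2) := by
      have := pow_le_pow_right₀ hs (by omega : 2 * m ≤ 2 * m + 2)
      linarith
    calc _ = 4 * ((m:ℝ) + 1) ^ 2 * (1 + s ^ (2 * m + 2)) * s ^ (2 * m) := by ring
      _ ≤ 4 * ((m:ℝ) + 1) ^ 2 * (1 + s ^ (2 * m + 2)) * (1 + s ^ (2 * m + 2)) := by gcongr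
      _ = _ := by ring
  rw [integral_Ioi_of_hasDerivAt_of_tendsto' hd hi ht]
  ring

/-- `A_t[Q] = (1/2) Q²` and `Q` is a static solution of self-dual CSS. -/
theorem stmt3 (m : ℕ) (r : ℝ) (hr : 0 < r) :
    At m (fun s => (Q m s : ℂ)) r = (1 / 2) * Q m r ^ 2 ∧
    -(At m (fun s => (Q m s : ℂ)) r) * Q m r + deriv (deriv (Q m)) r
      + (1 / r) * deriv (Q m) r
      - (((m : ℝ) + Atheta (fun s => (Q m s : ℂ)) r) / r) ^ 2 * Q m r
      + Q m r ^ 3 = 0 := by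
  refine ⟨aux_At m r hr, ?_⟩
  rw [aux_At m r hr, (aux_Qd m r hr).deriv]
  have hev : deriv (Q m) =ᶠ[nhds r]
      fun s => ((m:ℝ) + Atheta (fun s => (Q m s : ℂ)) s) / s * Q m s := by
    filter_upwards [lt_mem_nhds hr] with s hs using (aux_Qd m s hs).deriv
  have h2 := ((aux_Aderiv m r).div (hasDerivAt_id r) hr.ne').mul (aux_Qd m r hr)
  have h3 : deriv (deriv (Q m)) r = _ := hev.deriv_eq.trans h2.deriv
  rw [h3]
  simp only [id, Pi.div_apply]
  field_simp
  ring
end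

section
/- Let m ≥ 1 be an integer and let f : (0,∞) → ℂ be continuously differentiable with f(r) → 0 as r → 0⁺, (m + A_θ[f](r))·|f(r)|² → 0 as r → ∞, and 2π·∫₀^∞ (|f'(r)|² + |f(r)|²/r² + |f(r)|⁴)·r dr < ∞. Then the energy has the self-dual form E[f] = (1/2)·2π·∫₀^∞ |f'(r) − ((m + A_θ[f](r))/r)·f(r)|²·r dr; in particular E[f] ≥ 0. -/
open MeasureTheory Set Filter

/-- self-dual form of the energy `E[f] = (1/2)·2π ∫₀^∞ |D_f f|² r dr ≥ 0`. -/
theorem stmt4 (m : ℕ) (hm : 1 ≤ m) (f : ℝ → ℂ)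
    (hf : ContDiffOn ℝ 1 f (Set.Ioi 0))
    (h0 : Tendsto f (nhdsWithin 0 (Set.Ioi 0)) (nhds 0))
    (hinf : Tendsto (fun r => ((m : ℝ) + Atheta f r) * ‖f r‖ ^ 2) atTop (nhds 0))
    (hint : IntegrableOn
      (fun r => (‖deriv f r‖ ^ 2 + ‖f r‖ ^ 2 / r ^ 2 + ‖f r‖ ^ 4) * r) (Set.Ioi 0)) :
    Energy m f = (1 / 2) * (2 * Real.pi * ∫ r in Set.Ioi (0:ℝ),
      ‖deriv f r - ((((m : ℝ) + Atheta f r) / r : ℝ) : ℂ) * f r‖ ^ 2 * r) ∧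
    0 ≤ Energy m f := by
  have hrpos : ∀ r ∈ Ioi (0:ℝ), (0:ℝ) < r := fun r hr => hr
  have hfc : ContinuousOn f (Ioi 0) := hf.continuousOn
  have hfd : ∀ r ∈ Ioi (0:ℝ), HasDerivAt f (deriv f r) r := fun r hr =>
    ((hf.differentiableOn (by norm_num)).differentiableAt (isOpen_Ioi.mem_nhds hr)).hasDerivAt
  have hdc : ContinuousOn (deriv f) (Ioi 0) := hf.continuousOn_deriv_of_isOpen isOpen_Ioi (by norm_num)
  have hid : ContinuousOn (fun r : ℝ => r) (Ioi 0) := continuousOn_id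
  have hne : ∀ r ∈ Ioi (0:ℝ), r ≠ 0 := fun r hr => ne_of_gt hr
  have meas : ∀ g : ℝ → ℝ, ContinuousOn g (Ioi 0) →
      AEStronglyMeasurable g (volume.restrict (Ioi (0:ℝ))) := fun g hg =>
    hg.aestronglyMeasurable measurableSet_Ioi
  have dom : ∀ g h : ℝ → ℝ, ContinuousOn g (Ioi 0) → IntegrableOn h (Ioi 0) →
      (∀ r ∈ Ioi (0:ℝ), 0 ≤ g r ∧ g r ≤ h r) → IntegrableOn g (Ioi 0) := by
    intro g h hg hh hb
    refine Integrable.mono' hh (meas g hg) ?_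
    filter_upwards [ae_restrict_mem measurableSet_Ioi] with r hr
    rw [Real.norm_of_nonneg (hb r hr).1]
    exact (hb r hr).2
  have hI1 : IntegrableOn (fun r => ‖deriv f r‖ ^ 2 * r) (Ioi 0) := by
    refine dom _ _ ((hdc.norm.pow 2).mul hid) hint fun r hr => ?_
    have := hrpos r hr
    refine ⟨by positivity, ?_⟩
    gcongr
    have : 0 ≤ ‖f r‖ ^ 2 / r ^ 2 + ‖f r‖ ^ 4 := by positivity
    linarith
  have hI4 : IntegrableOn (fun r => ‖f r‖ ^ 4 * r) (Ioi 0) := by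
    refine dom _ _ ((hfc.norm.pow 4).mul hid) hint fun r hr => ?_
    have := hrpos r hr
    refine ⟨by positivity, ?_⟩
    gcongr
    have : 0 ≤ ‖deriv f r‖ ^ 2 + ‖f r‖ ^ 2 / r ^ 2 := by positivity
    linarith
  have hcs : ContinuousOn (fun s => ‖f s‖ ^ 2 * s) (Ioi 0) := (hfc.norm.pow 2).mul hid
  have hII : ∀ r ∈ Ioi (0:ℝ), IntervalIntegrable (fun s => ‖f s‖ ^ 2 * s) volume 0 r := by
    intro r hr
    rw [intervalIntegrable_iff_integrableOn_Ioc_of_le (le_of_lt hr)]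
    have hsub : Ioc 0 r ⊆ Ioi 0 := Ioc_subset_Ioi_self
    refine Integrable.mono' ((hint.mono_set hsub).const_mul (r ^ 2))
      ((hcs.mono hsub).aestronglyMeasurable measurableSet_Ioc) ?_
    filter_upwards [ae_restrict_mem measurableSet_Ioc] with s hs
    have hs0 : 0 < s := hs.1
    rw [Real.norm_of_nonneg (by positivity)]
    have h1 : ‖f s‖ ^ 2 * s = s ^ 2 * (‖f s‖ ^ 2 / s ^ 2 * s) := by field_simp
    rw [h1]
    have h2 : s ^ 2 ≤ r ^ 2 := pow_le_pow_left₀ hs0.le hs.2 2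
    have h3 : ‖f s‖ ^ 2 / s ^ 2 ≤ ‖deriv f s‖ ^ 2 + ‖f s‖ ^ 2 / s ^ 2 + ‖f s‖ ^ 4 := by
      have : 0 ≤ ‖deriv f s‖ ^ 2 + ‖f s‖ ^ 4 := by positivity
      linarith
    gcongr
  have hAd : ∀ r ∈ Ioi (0:ℝ), HasDerivAt (Atheta f) (-(1/2) * (‖f r‖ ^ 2 * r)) r := by
    intro r hr
    have := intervalIntegral.integral_hasDerivAt_right (hII r hr)
      (hcs.stronglyMeasurableAtFilter isOpen_Ioi r hr) (hcs.continuousAt (isOpen_Ioi.mem_nhds hr))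
    exact this.const_mul _
  have hAc : ContinuousOn (Atheta f) (Ioi 0) := fun r hr =>
    (hAd r hr).continuousAt.continuousWithinAt
  have hac : ContinuousOn (fun r => ((m:ℝ) + Atheta f r)) (Ioi 0) := continuousOn_const.add hAc
  -- Atheta tends to 0 at 0
  have hA0 : Tendsto (Atheta f) (nhdsWithin 0 (Ioi 0)) (nhds 0) := by
    have hc : ContinuousOn (fun r => ∫ s in (0:ℝ)..r, ‖f s‖ ^ 2 * s) (Icc 0 1) := by
      have h1 := hII 1 (by norm_num)
      rw [intervalIntegrable_iff_integrableOn_Icc_of_le zero_le_one] at h1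
      exact intervalIntegral.continuousOn_primitive_interval (by rwa [uIcc_of_le zero_le_one]) |>.mono
        (by rw [uIcc_of_le zero_le_one])
    have h2 : Tendsto (fun r => ∫ s in (0:ℝ)..r, ‖f s‖ ^ 2 * s) (nhdsWithin 0 (Ioi 0)) (nhds 0) := by
      have h3 := hc 0 (by simp)
      unfold ContinuousWithinAt at h3
      simp only [intervalIntegral.integral_same] at h3
      refine h3.mono_left ?_
      rw [← nhdsWithin_Ioc_eq_nhdsGT (zero_lt_one)]
      exact nhdsWithin_mono _ Ioc_subset_Icc_self
    have := h2.const_mul (-(1/2) : ℝ)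
    rw [mul_zero] at this
    exact this
  set D : ℝ → ℝ := fun r =>
    ‖deriv f r - ((((m : ℝ) + Atheta f r) / r : ℝ) : ℂ) * f r‖ ^ 2 * r with hD
  set E : ℝ → ℝ := fun r => ((1 / 2) * ‖deriv f r‖ ^ 2
      + (1 / 2) * (((m : ℝ) + Atheta f r) / r) ^ 2 * ‖f r‖ ^ 2
      - (1 / 4) * ‖f r‖ ^ 4) * r with hE
  set P : ℝ → ℝ := fun r => (((m : ℝ) + Atheta f r) / r) ^ 2 * ‖f r‖ ^ 2 * r with hP
  set G : ℝ → ℝ := fun r => ((m : ℝ) + Atheta f r) * ‖f r‖ ^ 2 with hG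
  have hqc : ContinuousOn (fun r => ((m : ℝ) + Atheta f r) / r) (Ioi 0) := hac.div hid hne
  have hPc : ContinuousOn P (Ioi 0) := ((hqc.pow 2).mul (hfc.norm.pow 2)).mul hid
  have hDc : ContinuousOn D (Ioi 0) :=
    ((hdc.sub ((Complex.continuous_ofReal.comp_continuousOn hqc).mul hfc)).norm.pow 2).mul hid
  have hGd : ∀ r ∈ Ioi (0:ℝ), HasDerivAt G (2 * E r - D r) r := by
    intro r hr
    have hr0 := hne r hr
    have h1 := ((hAd r hr).const_add (m:ℝ)).mul (hfd r hr).norm_sq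
    refine h1.congr_deriv ?_
    simp only [hE, hD]
    generalize Atheta f r = A
    rw [← Complex.normSq_eq_norm_sq (deriv f r - _), Complex.normSq_apply]
    have e4 : ‖f r‖ ^ 4 = (‖f r‖ ^ 2) ^ 2 := by ring
    rw [e4, ← Complex.normSq_eq_norm_sq (f r), ← Complex.normSq_eq_norm_sq (deriv f r),
      Complex.normSq_apply, Complex.normSq_apply, Complex.inner]
    simp only [Complex.sub_re, Complex.sub_im, Complex.mul_re, Complex.mul_im,
      Complex.ofReal_re, Complex.ofReal_im, Complex.conj_re, Complex.conj_im]
    field_simp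
    ring
  have hEP : ∀ r, E r = (1/2) * (‖deriv f r‖ ^ 2 * r) + (1/2) * P r - (1/4) * (‖f r‖ ^ 4 * r) := by
    intro r; simp only [hE, hP]; ring
  have hDnn : ∀ r ∈ Ioi (0:ℝ), 0 ≤ D r := fun r hr => by
    have := hrpos r hr
    simp only [hD]; positivity
  have hPnn : ∀ r ∈ Ioi (0:ℝ), 0 ≤ P r := fun r hr => by
    have := hrpos r hr
    simp only [hP]; positivity
  have hPn : ∀ r, P r = ‖((((m : ℝ) + Atheta f r) / r : ℝ) : ℂ) * f r‖ ^ 2 * r := by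
    intro r
    simp only [hP]
    rw [norm_mul, mul_pow, Complex.norm_real, Real.norm_eq_abs, sq_abs]
  have key : (∫ r in Ioi (0:ℝ), E r) = (1/2) * ∫ r in Ioi (0:ℝ), D r := by
    by_cases hPi : IntegrableOn P (Ioi 0)
    · have hEi : IntegrableOn E (Ioi 0) := by
        have : E = fun r => (1/2) * (‖deriv f r‖ ^ 2 * r) + (1/2) * P r - (1/4) * (‖f r‖ ^ 4 * r) :=
          funext hEP
        rw [this]
        exact ((hI1.const_mul _).add (hPi.const_mul _)).sub (hI4.const_mul _)
      have hDi : IntegrableOn D (Ioi 0) := by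
        refine dom D _ hDc ((hI1.const_mul 2).add (hPi.const_mul 2)) fun r hr => ⟨hDnn r hr, ?_⟩
        have := hrpos r hr
        simp only [Pi.add_apply, hPn r, hD]
        generalize ((((m : ℝ) + Atheta f r) / r : ℝ) : ℂ) * f r = z
        have h1 := norm_sub_le (deriv f r) z
        have h2 : ‖deriv f r - z‖ ^ 2 ≤ 2 * ‖deriv f r‖ ^ 2 + 2 * ‖z‖ ^ 2 := by
          nlinarith [norm_nonneg (deriv f r - z), sq_nonneg (‖deriv f r‖ - ‖z‖)]
        nlinarith
      have hG0 : Tendsto G (nhdsWithin 0 (Ioi 0)) (nhds 0) := by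
        have := (hA0.const_add (m:ℝ)).mul (h0.norm.pow 2)
        simpa [hG] using this
      have := integral_Ioi_deriv_mul_eq_sub (a := 0) (u := G) (v := fun _ => (1:ℝ))
        (u' := fun r => 2 * E r - D r) (v' := fun _ => (0:ℝ)) (a' := 0) (b' := 0) hGd
        (fun x _ => hasDerivAt_const x (1:ℝ))
        (((hEi.const_mul 2).sub hDi).congr (Eventually.of_forall fun r => by simp))
        (hG0.congr fun r => by simp) (hinf.congr fun r => by simp)
      simp only [mul_one, mul_zero, add_zero] at this
      rw [integral_sub (hEi.const_mul 2) hDi, integral_const_mul] at this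
      linarith
    · have hEi : ¬ IntegrableOn E (Ioi 0) := by
        intro h
        apply hPi
        have : P = fun r => 2 * E r - (‖deriv f r‖ ^ 2 * r) + (1/2) * (‖f r‖ ^ 4 * r) := by
          funext r; rw [hEP r]; ring
        rw [this]
        exact ((h.const_mul _).sub hI1).add (hI4.const_mul _)
      have hDi : ¬ IntegrableOn D (Ioi 0) := by
        intro h
        apply hPi
        refine dom P _ hPc ((hI1.const_mul 2).add (h.const_mul 2)) fun r hr => ⟨hPnn r hr, ?_⟩
        have := hrpos r hr
        simp only [Pi.add_apply, hPn r, hD]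
        generalize ((((m : ℝ) + Atheta f r) / r : ℝ) : ℂ) * f r = z
        have h1 : ‖z‖ ≤ ‖deriv f r‖ + ‖deriv f r - z‖ := by
          have := norm_sub_le (deriv f r) (deriv f r - z)
          rwa [sub_sub_cancel] at this
        have h2 : ‖z‖ ^ 2 ≤ 2 * ‖deriv f r‖ ^ 2 + 2 * ‖deriv f r - z‖ ^ 2 := by
          nlinarith [norm_nonneg z, sq_nonneg (‖deriv f r‖ - ‖deriv f r - z‖)]
        nlinarith
      rw [integral_undef hEi, integral_undef hDi, mul_zero]
  have hEn : Energy m f = (1 / 2) * (2 * Real.pi * ∫ r in Ioi (0:ℝ), D r) := by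
    have : Energy m f = 2 * Real.pi * ∫ r in Ioi (0:ℝ), E r := rfl
    rw [this, key]; ring
  refine ⟨hEn, ?_⟩
  rw [hEn]
  have := setIntegral_nonneg measurableSet_Ioi hDnn (μ := volume)
  have := Real.pi_pos
  positivity
end

section
/- Let m ≥ 1 be an integer, let I ⊆ (0,∞) be an open interval, and let u : I×(0,∞) → ℂ be smooth with r ↦ |u(t,r)|²·r integrable for each t ∈ I, satisfying the CSS equation at every point of I×(0,∞). Let J = {−1/s : s ∈ I} ⊆ (−∞,0) and define the pseudoconformal transform v(t,r) = (1/|t|)·u(−1/t, r/|t|)·e^{i·r²/(4t)} for (t,r) ∈ J×(0,∞). Then v satisfies the CSS equation at every point of J×(0,∞). -/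
open MeasureTheory Set Filter

theorem aux_Atheta_s6 (f g : ℝ → ℂ) (l : ℝ) (hl : 0 < l)
    (h : ∀ r, ‖g r‖ = l * ‖f (l * r)‖) (r : ℝ) : Atheta g r = Atheta f (l * r) := by
  unfold Atheta
  congr 1
  have h1 := intervalIntegral.mul_integral_comp_mul_left (a := 0) (b := r)
    (f := fun s => ‖f s‖ ^ 2 * s) l
  rw [mul_zero] at h1
  rw [← h1, ← intervalIntegral.integral_const_mul]
  apply intervalIntegral.integral_congr
  intro s _
  simp only [h]
  ring

theorem aux_At_s6 (m : ℕ) (f g : ℝ → ℂ) (l : ℝ) (hl : 0 < l)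
    (h : ∀ r, ‖g r‖ = l * ‖f (l * r)‖) (r : ℝ) : At m g r = l ^ 2 * At m f (l * r) := by
  unfold At
  have h1 := integral_comp_mul_left_Ioi
    (fun s => ((m : ℝ) + Atheta f s) * ‖f s‖ ^ 2 / s) r hl
  have h2 : (∫ s in Set.Ioi (l * r), ((m : ℝ) + Atheta f s) * ‖f s‖ ^ 2 / s)
      = l * ∫ s in Set.Ioi r, ((m : ℝ) + Atheta f (l * s)) * ‖f (l * s)‖ ^ 2 / (l * s) := by
    rw [h1, smul_eq_mul]
    field_simp
  rw [h2, mul_neg, ← mul_assoc, ← integral_const_mul]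
  congr 1
  congr 1
  ext s
  rw [aux_Atheta_s6 f g l hl h, h]
  rcases eq_or_ne s 0 with rfl | hs
  · simp
  · field_simp

/-- the pseudoconformal transform of a solution of CSS is again a solution. -/
theorem stmt6 (m : ℕ) (hm : 1 ≤ m) (I : Set ℝ) (hI : I ⊆ Set.Ioi 0)
    (hIint : ∃ a b : ℝ, I = Set.Ioo a b)
    (u : ℝ → ℝ → ℂ)
    (hsmooth : ContDiffOn ℝ (⊤ : ℕ∞) (fun p : ℝ × ℝ => u p.1 p.2) (I ×ˢ Set.Ioi (0:ℝ)))
    (hint : ∀ t ∈ I, IntegrableOn (fun r => ‖u t r‖ ^ 2 * r) (Set.Ioi (0:ℝ)))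
    (hCSS : ∀ t ∈ I, ∀ r : ℝ, 0 < r → CSSeq m u t r)
    (v : ℝ → ℝ → ℂ)
    (hv : ∀ t ∈ (fun s : ℝ => -1 / s) '' I, ∀ r : ℝ,
      v t r = ((1 / |t| : ℝ) : ℂ) * u (-1 / t) (r / |t|) *
        Complex.exp (Complex.I * (r : ℂ) ^ 2 / (4 * (t : ℂ)))) :
    ∀ t ∈ (fun s : ℝ => -1 / s) '' I, ∀ r : ℝ, 0 < r → CSSeq m v t r := by
  have hIo : IsOpen I := by
    obtain ⟨a, b, rfl⟩ := hIint
    exact isOpen_Ioo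
  -- reformulate in terms of the new time
  have hv' : ∀ l ∈ I, ∀ r : ℝ, v (-1 / l) r = (l : ℂ) * u l (l * r) *
      Complex.exp (-(Complex.I / 4 * l * (r : ℂ) ^ 2)) := by
    intro l hl r
    have hl0 : 0 < l := hI hl
    have hlc : (l : ℂ) ≠ 0 := by exact_mod_cast hl0.ne'
    rw [hv _ ⟨l, hl, rfl⟩]
    have e1 : |-1 / l| = 1 / l := by rw [abs_div, abs_neg, abs_one, abs_of_pos hl0]
    have e2 : -1 / (-1 / l) = l := by field_simp
    have e3 : r / (1 / l) = l * r := by field_simp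
    rw [e1, e2, e3, one_div_one_div]
    congr 2
    push_cast
    field_simp
  rintro _ ⟨l, hl, rfl⟩ r hr
  have hl0 : 0 < l := hI hl
  have hlc : (l : ℂ) ≠ 0 := by exact_mod_cast hl0.ne'
  have hrc : (r : ℂ) ≠ 0 := by exact_mod_cast hr.ne'
  have hlr : 0 < l * r := mul_pos hl0 hr
  have key := hCSS l hl (l * r) hlr
  simp only
  -- norms
  have hnorm : ∀ r, ‖v (-1 / l) r‖ = l * ‖u l (l * r)‖ := by
    intro r
    rw [hv' l hl r, norm_mul, norm_mul, Complex.norm_real, Real.norm_of_nonneg hl0.le]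
    have : -(Complex.I / 4 * l * (r : ℂ) ^ 2) = ((-(l * r ^ 2 / 4) : ℝ) : ℂ) * Complex.I := by
      push_cast; ring
    rw [this, Complex.norm_exp_ofReal_mul_I, mul_one]
  have hAt := aux_At_s6 m (u l) (v (-1 / l)) l hl0 hnorm r
  have hAth := aux_Atheta_s6 (u l) (v (-1 / l)) l hl0 hnorm r
  -- smoothness
  have hopen : IsOpen (I ×ˢ Set.Ioi (0:ℝ)) := hIo.prod isOpen_Ioi
  have hF : DifferentiableAt ℝ (fun p : ℝ × ℝ => u p.1 p.2) (l, l * r) :=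
    ((hsmooth.contDiffAt (hopen.mem_nhds (Set.mk_mem_prod hl hlr))).differentiableAt (by simp))
  obtain ⟨F', hF'⟩ := hF
  have hus : ContDiffOn ℝ (⊤ : ℕ∞) (u l) (Set.Ioi 0) := by
    have : ContDiffOn ℝ (⊤ : ℕ∞) (fun x : ℝ => ((l, x) : ℝ × ℝ)) (Set.Ioi 0) :=
      (contDiff_const.prodMk contDiff_id).contDiffOn
    exact hsmooth.comp this (fun x hx => ⟨hl, hx⟩)
  have hu1 : ∀ x, 0 < x → HasDerivAt (u l) (deriv (u l) x) x := fun x hx =>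
    ((hus.contDiffAt (isOpen_Ioi.mem_nhds hx)).differentiableAt (by simp)).hasDerivAt
  have hu2 : HasDerivAt (deriv (u l)) (deriv (deriv (u l)) (l * r)) (l * r) := by
    have h2 : ContDiffOn ℝ 1 (deriv (u l)) (Set.Ioi 0) :=
      hus.deriv_of_isOpen isOpen_Ioi (by norm_cast)
    exact ((h2.contDiffAt (isOpen_Ioi.mem_nhds hlr)).differentiableAt (by simp)).hasDerivAt
  have ht1 : HasDerivAt (fun s => u s (l * r)) (F' (1, 0)) l := by
    have := hF'.comp_hasDerivAt l ((hasDerivAt_id l).prodMk (hasDerivAt_const l (l * r)))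
    exact this
  have hr1 : HasDerivAt (u l) (F' (0, 1)) (l * r) := by
    have := hF'.comp_hasDerivAt (l * r)
      ((hasDerivAt_const (l * r) l).prodMk (hasDerivAt_id (l * r)))
    exact this
  have hF10 : deriv (fun s => u s (l * r)) l = F' (1, 0) := ht1.deriv
  have hF01 : deriv (u l) (l * r) = F' (0, 1) := hr1.deriv
  have hdiag : HasDerivAt (fun s => u s (s * r)) (F' (1, 0) + r * F' (0, 1)) l := by
    have := hF'.comp_hasDerivAt l ((hasDerivAt_id l).prodMk ((hasDerivAt_id l).mul_const r))
    refine HasDerivAt.congr_deriv this ?_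
    have e : ((1 : ℝ), 1 * r) = ((1 : ℝ), (0 : ℝ)) + r • ((0 : ℝ), (1 : ℝ)) := by
      ext <;> simp
    rw [e, map_add, map_smul, Complex.real_smul]
  -- phase derivatives
  set E : ℝ → ℂ := fun x => Complex.exp (-(Complex.I / 4 * l * (x : ℂ) ^ 2)) with hE
  have hEr : ∀ x : ℝ, HasDerivAt E (-(Complex.I / 2 * l * x) * E x) x := by
    intro x
    have h1 : HasDerivAt (fun x : ℝ => (x : ℂ)) 1 x := Complex.ofRealCLM.hasDerivAt
    have h2 := ((h1.pow 2).const_mul (Complex.I / 4 * l)).fun_neg.cexp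
    refine HasDerivAt.congr_deriv h2 ?_
    simp only [hE, Pi.pow_apply]
    push_cast
    ring
  have hEl : HasDerivAt (fun s : ℝ => Complex.exp (-(Complex.I / 4 * s * (r : ℂ) ^ 2)))
      (-(Complex.I / 4 * (r : ℂ) ^ 2) * E r) l := by
    have h1 : HasDerivAt (fun x : ℝ => (x : ℂ)) 1 l := Complex.ofRealCLM.hasDerivAt
    have h2 := ((h1.const_mul (Complex.I / 4)).mul_const ((r : ℂ) ^ 2)).fun_neg.cexp
    refine HasDerivAt.congr_deriv h2 ?_
    simp only [hE]
    ring
  -- space derivatives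
  have hscal : ∀ x : ℝ, HasDerivAt (fun y : ℝ => l * y) l x := by
    intro x; simpa using (hasDerivAt_id x).const_mul l
  have hvr : ∀ x, 0 < x → HasDerivAt (v (-1 / l))
      ((l : ℂ) * (l * deriv (u l) (l * x) - Complex.I / 2 * l * x * u l (l * x)) * E x) x := by
    intro x hx
    have h1 := ((hu1 (l * x) (mul_pos hl0 hx)).scomp x (hscal x)).const_mul (l : ℂ)
    have h2 := h1.mul (hEr x)
    have h3 : v (-1 / l) = fun x => (l : ℂ) * u l (l * x) * E x := funext (hv' l hl)
    rw [h3]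
    refine HasDerivAt.congr_deriv h2 ?_
    simp only [Complex.real_smul, Function.comp]
    ring
  have hvrr : HasDerivAt (deriv (v (-1 / l)))
      ((l : ℂ) * (l ^ 2 * deriv (deriv (u l)) (l * r)
        - Complex.I * l ^ 2 * r * deriv (u l) (l * r)
        - Complex.I / 2 * l * u l (l * r) - l ^ 2 * r ^ 2 / 4 * u l (l * r)) * E r) r := by
    have h0 : deriv (v (-1 / l)) =ᶠ[nhds r] fun x =>
        (l : ℂ) * (l * deriv (u l) (l * x) - Complex.I / 2 * l * x * u l (l * x)) * E x := by
      filter_upwards [isOpen_Ioi.mem_nhds hr] with x hx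
      exact (hvr x hx).deriv
    refine HasDerivAt.congr_of_eventuallyEq ?_ h0
    have hx : HasDerivAt (fun x : ℝ => (x : ℂ)) 1 r := Complex.ofRealCLM.hasDerivAt
    have h1 := (hu2.scomp r (hscal r)).const_mul (l : ℂ)
    have h2 := (hu1 (l * r) hlr).scomp r (hscal r)
    have h3 := ((h1.sub ((hx.const_mul (Complex.I / 2 * l)).mul h2)).const_mul (l : ℂ)).mul (hEr r)
    refine HasDerivAt.congr_deriv h3 ?_
    simp only [Complex.real_smul, Function.comp, Pi.sub_apply, Pi.mul_apply]
    linear_combination ((l : ℂ) ^ 3 * r ^ 2 / 4 * u l (l * r) * E r) * Complex.I_sq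
  -- time derivative
  have hvt : HasDerivAt (fun s => v s r)
      ((l : ℂ) ^ 2 * (u l (l * r) + l * (F' (1, 0) + r * F' (0, 1))
        - Complex.I / 4 * l * r ^ 2 * u l (l * r)) * E r) (-1 / l) := by
    have hne : (-1 / l) ≠ 0 := by
      rw [neg_div]; exact neg_ne_zero.mpr (one_div_pos.mpr hl0).ne'
    have e2 : -1 / (-1 / l) = l := by field_simp
    have hinv : HasDerivAt (fun s : ℝ => -1 / s) (l ^ 2) (-1 / l) := by
      have := (hasDerivAt_inv hne).const_mul (-1)
      refine HasDerivAt.congr_deriv this ?_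
      field_simp
    have hG : HasDerivAt (fun s : ℝ => (s : ℂ) * u s (s * r) *
        Complex.exp (-(Complex.I / 4 * s * (r : ℂ) ^ 2)))
        ((u l (l * r) + l * (F' (1, 0) + r * F' (0, 1))
        - Complex.I / 4 * l * r ^ 2 * u l (l * r)) * E r) l := by
      have hx : HasDerivAt (fun x : ℝ => (x : ℂ)) 1 l := Complex.ofRealCLM.hasDerivAt
      have h := (hx.mul hdiag).mul hEl
      refine HasDerivAt.congr_deriv h ?_
      simp only [hE, Pi.mul_apply]
      ring
    have hG' := hG
    rw [← e2] at hG'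
    have hcomp := HasDerivAt.scomp (-1 / l) hG' hinv
    have hev : (fun s => v s r) =ᶠ[nhds (-1 / l)] (fun s : ℝ => (s : ℂ) * u s (s * r) *
        Complex.exp (-(Complex.I / 4 * s * (r : ℂ) ^ 2))) ∘ (fun s : ℝ => -1 / s) := by
      have hc : ∀ᶠ s in nhds (-1 / l), -1 / s ∈ I :=
        hinv.continuousAt.eventually (by simp only [e2]; exact hIo.mem_nhds hl)
      filter_upwards [hc] with s hs
      have hs0 : s ≠ 0 := by
        rintro rfl
        have := hI hs
        simp at this
      have := hv' _ hs r
      have e3 : -1 / (-1 / s) = s := by field_simp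
      rw [e3] at this
      exact this
    have hfin := hcomp.congr_of_eventuallyEq hev
    simp only [e2] at hfin
    refine HasDerivAt.congr_deriv hfin ?_
    rw [Complex.real_smul]
    push_cast
    ring
  unfold CSSeq at key ⊢
  rw [hvt.deriv, hvrr.deriv, (hvr r hr).deriv, hAt, hAth, hnorm, hv' l hl r]
  rw [hF10] at key
  rw [hF01] at key ⊢
  have hEe : Complex.exp (-(Complex.I / 4 * l * (r : ℂ) ^ 2)) = E r := rfl
  rw [hEe]
  push_cast at key ⊢
  have k2 := congrArg (fun z => (l : ℂ) ^ 3 * E r * z) key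
  simp only [mul_zero] at k2
  rw [← k2]
  field_simp
  ring_nf
  simp only [Complex.I_sq]
  ring
end
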